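/- The set DS_{a,b} = {α_0, α_1, …, α_{n−b}} is closed under the addition and multiplication of STR{a,b}; in it α_0 is a zero element (α_0 + α_k = α_k and α_0 · α_k = α_k · α_0 = α_0 for all 0 ≤ k ≤ n − b) and α_{n−b} is a right identity (α_k · α_{n−b} = α_k for all 0 ≤ k ≤ n − b). Moreover the map D with D(α_k) = α_{k−1} for k ≥ 1 and D(α_0) = α_0 is a derivation of DS_{a,b}: for all 0 ≤ k, ℓ ≤ n − b, D(α_k + α_ℓ) = D(α_k) + D(α_ℓ) and D(α_k · α_ℓ) = D(α_k) · α_ℓ + α_k · D(α_ℓ). -/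

import Mathlib

/-- Pointwise-max addition on endomorphisms of the chain `Fin N`. -/
def sAdd {N : ℕ} (f g : Fin N → Fin N) : Fin N → Fin N := fun i => max (f i) (g i)

/-- Multiplication in diagram order: `(f·g)(i) = g (f i)`. -/
def sMul {N : ℕ} (f g : Fin N → Fin N) : Fin N → Fin N := fun i => g (f i)

/-- The element `α_k` of the string `STR{a,b}`: `α_k i = a` if `i ≤ N - k - 1`
    (equivalently `i + k < N`) and `α_k i = b` otherwise. -/
def alpha {N : ℕ} (a b : Fin N) (k : ℕ) : Fin N → Fin N :=
  fun i => if (i : ℕ) + k < N then a else b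

theorem sAdd_alpha {n : ℕ} {a b : Fin n} (hab : a < b) (k l : ℕ) :
    sAdd (alpha a b k) (alpha a b l) = alpha a b (max k l) := by
  funext i
  have h1 := max_eq_right hab.le
  have h2 := max_eq_left hab.le
  simp only [sAdd, alpha]
  split_ifs <;> first | omega | simp [h1, h2]

theorem sMul_alpha_top {n : ℕ} {a b : Fin n} (hab : a < b) (k : ℕ) :
    sMul (alpha a b k) (alpha a b (n - (b : ℕ))) = alpha a b k := by
  funext i
  have hb := b.isLt
  have hab' : (a : ℕ) < b := hab
  simp only [sMul, alpha]
  split_ifs <;> first | omega | rfl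

theorem sMul_alpha_lt {n : ℕ} {a b : Fin n} (hab : a < b) (k l : ℕ) (hl : l < n - (b : ℕ)) :
    sMul (alpha a b k) (alpha a b l) = alpha a b 0 := by
  funext i
  have hi := i.isLt
  have hb := b.isLt
  have hab' : (a : ℕ) < b := hab
  simp only [sMul, alpha]
  split_ifs <;> first | omega | rfl

/-- `DS_{a,b} = {α_0,…,α_{n−b}}` is closed under addition and
multiplication; `α_0` is a zero element and `α_{n−b}` a right identity in it;
and the map `D` with `D(α_k) = α_{k−1}` (and `D(α_0) = α_0`, encoded by
truncated subtraction `k - 1`) is a derivation of `DS_{a,b}`. -/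
theorem stmt3 (n : ℕ) (a b : Fin n) (hab : a < b) :
    -- closure of DS under addition and multiplication
    (∀ k ℓ : ℕ, k ≤ n - (b : ℕ) → ℓ ≤ n - (b : ℕ) →
      (∃ m ≤ n - (b : ℕ), sAdd (alpha a b k) (alpha a b ℓ) = alpha a b m) ∧
      (∃ m ≤ n - (b : ℕ), sMul (alpha a b k) (alpha a b ℓ) = alpha a b m)) ∧
    -- α_0 is a zero element of DS
    (∀ k : ℕ, k ≤ n - (b : ℕ) →
      sAdd (alpha a b 0) (alpha a b k) = alpha a b k ∧
      sMul (alpha a b 0) (alpha a b k) = alpha a b 0 ∧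
      sMul (alpha a b k) (alpha a b 0) = alpha a b 0) ∧
    -- α_{n-b} is a right identity of DS
    (∀ k : ℕ, k ≤ n - (b : ℕ) →
      sMul (alpha a b k) (alpha a b (n - (b : ℕ))) = alpha a b k) ∧
    -- D is additive: D(α_k + α_ℓ) = D(α_k) + D(α_ℓ)
    (∀ k ℓ : ℕ, k ≤ n - (b : ℕ) → ℓ ≤ n - (b : ℕ) →
      sAdd (alpha a b k) (alpha a b ℓ) = alpha a b (max k ℓ) ∧
      alpha a b (max k ℓ - 1) = sAdd (alpha a b (k - 1)) (alpha a b (ℓ - 1))) ∧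
    -- D satisfies the Leibniz rule: D(α_k · α_ℓ) = D(α_k)·α_ℓ + α_k·D(α_ℓ)
    (∀ k ℓ : ℕ, k ≤ n - (b : ℕ) → ℓ ≤ n - (b : ℕ) →
      ∃ m ≤ n - (b : ℕ), sMul (alpha a b k) (alpha a b ℓ) = alpha a b m ∧
        alpha a b (m - 1) =
          sAdd (sMul (alpha a b (k - 1)) (alpha a b ℓ))
               (sMul (alpha a b k) (alpha a b (ℓ - 1)))) := by
  have hb : 0 < n - (b : ℕ) := by have := b.isLt; omega
  have hmul0 : ∀ l, l ≤ n - (b : ℕ) → sMul (alpha a b 0) (alpha a b l) = alpha a b 0 := by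
    intro l hl
    rcases hl.lt_or_eq with h | h
    · exact sMul_alpha_lt hab 0 l h
    · rw [h]; exact sMul_alpha_top hab 0
  have leib : ∀ k l : ℕ, k ≤ n - (b : ℕ) → l ≤ n - (b : ℕ) →
      ∃ m ≤ n - (b : ℕ), sMul (alpha a b k) (alpha a b l) = alpha a b m ∧
        alpha a b (m - 1) =
          sAdd (sMul (alpha a b (k - 1)) (alpha a b l))
               (sMul (alpha a b k) (alpha a b (l - 1))) := by
    intro k l hk hl
    rcases hl.lt_or_eq with h | h
    · refine ⟨0, Nat.zero_le _, sMul_alpha_lt hab k l h, ?_⟩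
      rw [sMul_alpha_lt hab _ l h, sMul_alpha_lt hab k (l - 1) (by omega), sAdd_alpha hab]
      simp
    · subst h
      refine ⟨k, hk, sMul_alpha_top hab k, ?_⟩
      rw [sMul_alpha_top hab, sMul_alpha_lt hab k (_ - 1) (by omega), sAdd_alpha hab]
      simp
  refine ⟨fun k l hk hl => ⟨⟨max k l, max_le hk hl, sAdd_alpha hab k l⟩, ?_⟩,
    fun k hk => ⟨?_, hmul0 k hk, sMul_alpha_lt hab k 0 hb⟩,
    fun k _ => sMul_alpha_top hab k,
    fun k l _ _ => ⟨sAdd_alpha hab k l, ?_⟩, leib⟩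
  · obtain ⟨m, hm, h, _⟩ := leib k l hk hl
    exact ⟨m, hm, h⟩
  · rw [sAdd_alpha hab]; simp
  · rw [sAdd_alpha hab]
    congr 1
    omega
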